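/- arXiv:2305.11420 — 6 statements merged into one kernel-verified Lean document; each statement's English description precedes it below -/
import Mathlib

section
/- For every integer n ≥ 2 and every integer k with 1 ≤ k ≤ n−1, there exist a natural number m with m ≤ 2·log_{k+1}(n) + 2 and real n×n matrices W^(1), …, W^(m) such that: each W^(i) is symmetric and doubly stochastic, each row of each W^(i) has at most k nonzero off-diagonal entries (i.e., the graph associated to W^(i) has maximum degree at most k), and the matrix product W^(1) W^(2) ⋯ W^(m) equals J_n. (This is the existence content of Theorem 1 and Corollary 1: the Base-(k+1) Graph is a finite-time convergent sequence of length at most 2·log_{k+1}(n) + 2 with maximum degree at most k, for every n and every k ∈ [n−1].) -/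
/-!
Write `b = k + 1` and call a matrix admissible if it is symmetric, doubly stochastic and of degree
at most `k`.  By induction on `q`, for every `n < b ^ q` there are matrices `D` and `E`, each a
product of `q` admissible matrices, with `E * D = J_n` (`exists_two_phase`); taking
`q = ⌊log_b n⌋ + 1` gives the theorem.

For the induction step write `n = a * b ^ q + R` with `a ≤ k` and `R < b ^ q`, and split the nodes
into `a` blocks of size `b ^ q` and a remainder of size `R`, on which the induction hypothesis
provides `D'` and `E'`.

* `D = J ⊕ D'`: the union of the blocks is averaged completely in `q + 1` rounds, because `J` on a
  product of index sets factors (`isProd_avg_prod`); `D'` is padded with one idle round.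
* `E = (I ⊗ J ⊕ E') * X`: in one round `X` (`exchange`), each node of the remainder is joined to
  one node in every block, no two remainder nodes using the same one, with weight
  `c = b ^ q / n` on every edge.  This makes the mean of every block equal to the global mean, and
  also moves the mean of the remainder there, so averaging each block separately (`q` rounds) and
  running `E'` on the remainder finish the job.

A node of the remainder has degree `a ≤ k` in `X` and a node of a block has degree at most `1`.
-/

/-- A square real matrix is doubly stochastic: nonnegative entries, each
row and each column sums to 1. -/
def DoublyStochastic {ι : Type*} [Fintype ι] (W : Matrix ι ι ℝ) : Prop :=
  (∀ i j, 0 ≤ W i j) ∧ (∀ i, ∑ j, W i j = 1) ∧ (∀ j, ∑ i, W i j = 1)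

/-- The graph associated to `W` has maximum degree at most `k`:
every row has at most `k` nonzero off-diagonal entries. -/
def MaxDegreeLE {ι : Type*} [Fintype ι] (W : Matrix ι ι ℝ) (k : ℕ) : Prop :=
  ∀ i, ({j | j ≠ i ∧ W i j ≠ 0} : Set ι).ncard ≤ k

open Matrix

/-! ### Admissible matrices and their products -/

/-- A single communication round: a symmetric stochastic (hence doubly stochastic) matrix of
degree at most `k`. -/
structure Admissible {α : Type} [Fintype α] (k : ℕ) (W : Matrix α α ℝ) : Prop where
  symm : ∀ i j, W i j = W j i
  nonneg : ∀ i j, 0 ≤ W i j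
  row : ∀ i, ∑ j, W i j = 1
  deg : MaxDegreeLE W k

/-- `IsProd k r M` says that `M` is a product of exactly `r` admissible matrices. -/
def IsProd {α : Type} [Fintype α] [DecidableEq α] (k : ℕ) : ℕ → Matrix α α ℝ → Prop
  | 0, M => M = 1
  | r + 1, M => ∃ W N, Admissible k W ∧ IsProd k r N ∧ M = W * N

/-- The averaging matrix `J` on an arbitrary finite index type. -/
noncomputable def avg (α : Type) [Fintype α] : Matrix α α ℝ :=
  Matrix.of fun _ _ => (Fintype.card α : ℝ)⁻¹

lemma maxDegreeLE_of_finset {α : Type} [Fintype α] {k : ℕ} {W : Matrix α α ℝ}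
    (h : ∀ i, ∃ s : Finset α, s.card ≤ k ∧ ∀ j, j ≠ i → W i j ≠ 0 → j ∈ s) :
    MaxDegreeLE W k := by
  intro i
  obtain ⟨s, hs, hj⟩ := h i
  refine le_trans ?_ hs
  rw [← Set.ncard_coe_finset]
  exact Set.ncard_le_ncard (fun j hj' => hj j hj'.1 hj'.2) s.finite_toSet

lemma MaxDegreeLE.exists_finset {α : Type} [Fintype α] {k : ℕ} {W : Matrix α α ℝ}
    (h : MaxDegreeLE W k) (i : α) :
    ∃ s : Finset α, s.card ≤ k ∧ ∀ j, j ≠ i → W i j ≠ 0 → j ∈ s := by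
  classical
  refine ⟨Finset.univ.filter fun j => j ≠ i ∧ W i j ≠ 0, ?_, fun j h1 h2 => by simp [h1, h2]⟩
  have := h i
  rw [← Set.ncard_coe_finset]
  simpa using this

section Constructions

variable {α β : Type} [Fintype α] [Fintype β] {k : ℕ}

lemma Admissible.submatrix {W : Matrix α α ℝ} (h : Admissible k W) (e : β ≃ α) :
    Admissible k (W.submatrix e e) where
  symm i j := h.symm _ _
  nonneg i j := h.nonneg _ _
  row i := by
    rw [← h.row (e i)]
    exact e.sum_comp (fun j => W (e i) j)
  deg := maxDegreeLE_of_finset fun i => by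
    obtain ⟨s, hs, hj⟩ := h.deg.exists_finset (e i)
    exact ⟨s.map e.symm.toEmbedding, by simpa using hs, fun j h1 h2 => by
      simpa using hj (e j) (by simpa using h1) h2⟩

lemma Admissible.directSum {W : Matrix α α ℝ} {V : Matrix β β ℝ} (hW : Admissible k W)
    (hV : Admissible k V) : Admissible k (fromBlocks W 0 0 V) where
  symm := by
    rintro (i | i) (j | j)
    exacts [hW.symm i j, rfl, rfl, hV.symm i j]
  nonneg := by
    rintro (i | i) (j | j) <;> simp [hW.nonneg, hV.nonneg]
  row := by
    rintro (i | i) <;> simp [hW.row, hV.row]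
  deg := maxDegreeLE_of_finset <| by
    rintro (i | i)
    · obtain ⟨s, hs, hj⟩ := hW.deg.exists_finset i
      refine ⟨s.map Function.Embedding.inl, by simpa using hs, ?_⟩
      rintro (j | j) h1 h2
      · simpa using hj j (by simpa using h1) (by simpa using h2)
      · simp at h2
    · obtain ⟨s, hs, hj⟩ := hV.deg.exists_finset i
      refine ⟨s.map Function.Embedding.inr, by simpa using hs, ?_⟩
      rintro (j | j) h1 h2
      · simp at h2
      · simpa using hj j (by simpa using h1) (by simpa using h2)

lemma Admissible.blockDiagonal [DecidableEq β] {W : Matrix α α ℝ} (hW : Admissible k W) :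
    Admissible k (Matrix.blockDiagonal fun _ : β => W) where
  symm := by
    rintro ⟨i, x⟩ ⟨j, y⟩
    simp [blockDiagonal_apply, hW.symm i j, eq_comm]
  nonneg := by
    rintro ⟨i, x⟩ ⟨j, y⟩
    rw [blockDiagonal_apply]
    split_ifs
    exacts [hW.nonneg _ _, le_rfl]
  row := by
    rintro ⟨i, x⟩
    simp [blockDiagonal_apply, Fintype.sum_prod_type, hW.row]
  deg := maxDegreeLE_of_finset <| by
    rintro ⟨i, x⟩
    obtain ⟨s, hs, hj⟩ := hW.deg.exists_finset i
    refine ⟨s ×ˢ {x}, by simpa using hs, ?_⟩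
    rintro ⟨j, y⟩ h1 h2
    by_cases hxy : x = y
    · subst hxy
      simpa using hj j (by simpa using h1) (by simpa [blockDiagonal_apply] using h2)
    · simp [blockDiagonal_apply, hxy] at h2

lemma avg_submatrix (e : β ≃ α) : (avg α).submatrix e e = avg β := by
  ext i j
  simp [avg, Fintype.card_congr e]

variable [DecidableEq α] [DecidableEq β]

lemma IsProd.mul {r s : ℕ} {M N : Matrix α α ℝ} (hM : IsProd k r M) (hN : IsProd k s N) :
    IsProd k (s + r) (M * N) := by
  induction r generalizing M with
  | zero =>
    obtain rfl : M = 1 := hM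
    simpa using hN
  | succ r ih =>
    obtain ⟨W, M', hW, hM', rfl⟩ := hM
    exact ⟨W, M' * N, hW, ih hM', by rw [Matrix.mul_assoc]⟩

/-- An idle round (the identity matrix) may be added. -/
lemma IsProd.succ {r : ℕ} {M : Matrix α α ℝ} (hM : IsProd k r M) : IsProd k (r + 1) M := by
  refine ⟨1, M, ⟨fun i j => ?_, fun i j => ?_, fun i => ?_, ?_⟩, hM, (Matrix.one_mul M).symm⟩
  · simp [one_apply, eq_comm]
  · rw [one_apply]
    split_ifs <;> simp
  · simp [one_apply]
  · exact maxDegreeLE_of_finset fun i => ⟨∅, by simp, fun j h1 h2 =>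
      absurd (one_apply_ne (Ne.symm h1)) h2⟩

lemma IsProd.submatrix {r : ℕ} {M : Matrix α α ℝ} (hM : IsProd k r M) (e : β ≃ α) :
    IsProd k r (M.submatrix e e) := by
  induction r generalizing M with
  | zero =>
    obtain rfl : M = 1 := hM
    exact submatrix_one_equiv e
  | succ r ih =>
    obtain ⟨W, M', hW, hM', rfl⟩ := hM
    exact ⟨_, _, hW.submatrix e, ih hM', (submatrix_mul_equiv _ _ _ _ _).symm⟩

lemma IsProd.directSum {r : ℕ} {M : Matrix α α ℝ} {N : Matrix β β ℝ} (hM : IsProd k r M)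
    (hN : IsProd k r N) : IsProd k r (fromBlocks M 0 0 N) := by
  induction r generalizing M N with
  | zero =>
    obtain rfl : M = 1 := hM
    obtain rfl : N = 1 := hN
    exact fromBlocks_one
  | succ r ih =>
    obtain ⟨W, M', hW, hM', rfl⟩ := hM
    obtain ⟨V, N', hV, hN', rfl⟩ := hN
    exact ⟨_, _, hW.directSum hV, ih hM' hN', by simp [fromBlocks_multiply]⟩

lemma IsProd.blockDiagonal {r : ℕ} {M : Matrix α α ℝ} (hM : IsProd k r M) :
    IsProd k r (Matrix.blockDiagonal fun _ : β => M) := by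
  induction r generalizing M with
  | zero =>
    obtain rfl : M = 1 := hM
    exact blockDiagonal_one
  | succ r ih =>
    obtain ⟨W, M', hW, hM', rfl⟩ := hM
    exact ⟨_, _, hW.blockDiagonal, ih hM', blockDiagonal_mul _ _⟩

lemma IsProd.row {r : ℕ} {M : Matrix α α ℝ} (hM : IsProd k r M) : M *ᵥ 1 = 1 := by
  induction r generalizing M with
  | zero =>
    obtain rfl : M = 1 := hM
    simp
  | succ r ih =>
    obtain ⟨W, M', hW, hM', rfl⟩ := hM
    rw [← mulVec_mulVec, ih hM']
    ext i
    simp [mulVec, dotProduct, hW.row]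

lemma IsProd.col {r : ℕ} {M : Matrix α α ℝ} (hM : IsProd k r M) : 1 ᵥ* M = 1 := by
  induction r generalizing M with
  | zero =>
    obtain rfl : M = 1 := hM
    simp
  | succ r ih =>
    obtain ⟨W, M', hW, hM', rfl⟩ := hM
    have hW1 : 1 ᵥ* W = 1 := by
      ext i
      simp [vecMul, dotProduct, fun j => hW.symm j i, hW.row]
    rw [← vecMul_vecMul, hW1, ih hM']

lemma IsProd.sum_row {r : ℕ} {M : Matrix α α ℝ} (hM : IsProd k r M) (i : α) :
    ∑ j, M i j = 1 := by
  simpa [mulVec, dotProduct] using congrFun hM.row i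

lemma IsProd.sum_col {r : ℕ} {M : Matrix α α ℝ} (hM : IsProd k r M) (j : α) :
    ∑ i, M i j = 1 := by
  simpa [vecMul, dotProduct] using congrFun hM.col j

/-! ### Averaging on products of index sets -/

lemma isProd_avg_of_card_le (h : Fintype.card α ≤ k + 1) : IsProd k 1 (avg α) := by
  refine ⟨avg α, 1, ⟨fun _ _ => rfl, fun i j => ?_, fun i => ?_, ?_⟩, rfl, by simp⟩
  · simp [avg]
  · have : Nonempty α := ⟨i⟩
    simp [avg]
  · refine maxDegreeLE_of_finset fun i => ⟨Finset.univ.erase i, ?_, fun j hj _ => by simp [hj]⟩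
    rw [Finset.card_erase_of_mem (Finset.mem_univ i), Finset.card_univ]
    omega

/-- `J` on a product is `(J ⊗ I) * (I ⊗ J)`, the factors being block diagonal. -/
lemma isProd_avg_prod {r s : ℕ} (hα : IsProd k r (avg α)) (hβ : IsProd k s (avg β)) :
    IsProd k (s + r) (avg (α × β)) := by
  have h := (hα.blockDiagonal (β := β)).mul
    ((hβ.blockDiagonal (β := α)).submatrix (Equiv.prodComm α β))
  convert h using 1
  ext ⟨i, x⟩ ⟨j, y⟩
  simp [avg, mul_apply, Fintype.sum_prod_type, blockDiagonal_apply, mul_comm]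

end Constructions

lemma isProd_avg_pow (k q : ℕ) : IsProd k q (avg (Fin ((k + 1) ^ q))) := by
  induction q with
  | zero =>
    change avg (Fin ((k + 1) ^ 0)) = 1
    ext i j
    have : Subsingleton (Fin ((k + 1) ^ 0)) := by
      rw [pow_zero]; infer_instance
    obtain rfl := Subsingleton.elim i j
    rw [one_apply_eq, avg, of_apply]
    simp
  | succ q ih =>
    have h := isProd_avg_prod (isProd_avg_of_card_le (α := Fin (k + 1)) (k := k) (by simp)) ih
    have e : Fin ((k + 1) ^ (q + 1)) ≃ Fin (k + 1) × Fin ((k + 1) ^ q) :=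
      Fintype.equivOfCardEq (by simp [pow_succ, mul_comm])
    simpa only [avg_submatrix] using h.submatrix e

/-! ### The exchange round -/

/-- The exchange round between `a` blocks of size `B` and a remainder of size `R`, where node `i` of
the remainder is joined with weight `c` to the node `f i` of every block.  The inner sum is `1` if
`j` is in the range of `f` and `0` otherwise, for injective `f`. -/
def exchange (a B R : ℕ) (f : Fin R → Fin B) (c : ℝ) :
    Matrix ((Fin B × Fin a) ⊕ Fin R) ((Fin B × Fin a) ⊕ Fin R) ℝ :=
  fromBlocks
    (diagonal fun p => 1 - ∑ i, if f i = p.1 then c else 0)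
    (of fun p i => if f i = p.1 then c else 0)
    (of fun i p => if f i = p.1 then c else 0)
    (diagonal fun _ => 1 - c * a)

lemma exchange_admissible {a B R k : ℕ} (hk : 1 ≤ k) (ha : a ≤ k) {f : Fin R → Fin B}
    (hf : Function.Injective f) :
    Admissible k (exchange a B R f ((B : ℝ) / (a * B + R : ℕ))) := by
  set c : ℝ := (B : ℝ) / (a * B + R : ℕ) with hc
  have hc0 : 0 ≤ c := by positivity
  refine ⟨?_, ?_, ?_, maxDegreeLE_of_finset ?_⟩
  · rintro (i | i) (j | j)
    · simp only [exchange, fromBlocks_apply₁₁, diagonal_apply]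
      by_cases h : i = j
      · simp [h]
      · simp [h, Ne.symm h]
    · simp [exchange]
    · simp [exchange]
    · simp [exchange, diagonal_apply, eq_comm]
  · rintro (i | i) (j | j)
    · simp only [exchange, fromBlocks_apply₁₁, diagonal_apply]
      split_ifs
      swap
      · exact le_rfl
      have hsum : (∑ x, if f x = i.1 then c else 0) ≤ c := by
        by_cases hx : ∃ x, f x = i.1
        · obtain ⟨x, hx⟩ := hx
          simp [← hx, hf.eq_iff]
        · push Not at hx
          simp [hx, hc0]
      -- the presence of the block node `i` forces `a ≥ 1`, whence `c ≤ 1`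
      have hc1 : c ≤ 1 := by
        refine div_le_one_of_le₀ ?_ (by positivity)
        have : 1 ≤ a := i.2.pos
        exact_mod_cast (by nlinarith : B ≤ a * B + R)
      linarith
    · simp only [exchange, fromBlocks_apply₁₂, of_apply]
      split_ifs <;> simp [hc0]
    · simp only [exchange, fromBlocks_apply₂₁, of_apply]
      split_ifs <;> simp [hc0]
    · simp only [exchange, fromBlocks_apply₂₂, diagonal_apply]
      split_ifs
      swap
      · exact le_rfl
      have : c * a ≤ 1 := by
        rw [hc, div_mul_eq_mul_div]
        refine div_le_one_of_le₀ ?_ (by positivity)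
        push_cast
        nlinarith [(Nat.cast_nonneg R : (0 : ℝ) ≤ R)]
      linarith
  · rintro (i | i)
    · simp [exchange, diagonal_apply]
    · simp [exchange, diagonal_apply, Fintype.sum_prod_type_right, mul_comm]
  · rintro (⟨p, s⟩ | i)
    · by_cases hx : ∃ x, f x = p
      · obtain ⟨x, hx⟩ := hx
        refine ⟨{Sum.inr x}, by simpa using hk, ?_⟩
        rintro (j | j) h1 h2
        · exact absurd (by simpa [exchange, diagonal_apply] using h2 :
            (p, s) = j ∧ _).1 (fun h => h1 (by rw [h]))
        · have : f j = p := by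
            by_contra h
            simp [exchange, h] at h2
          simpa using hf (this.trans hx.symm)
      · refine ⟨∅, by simp, ?_⟩
        rintro (j | j) h1 h2
        · exact absurd (by simpa [exchange, diagonal_apply] using h2 :
            (p, s) = j ∧ _).1 (fun h => h1 (by rw [h]))
        · push Not at hx
          simp [exchange, hx] at h2
    · refine ⟨({f i} ×ˢ Finset.univ : Finset (Fin B × Fin a)).map Function.Embedding.inl,
        by simpa using ha, ?_⟩
      rintro (j | j) h1 h2
      · have : f i = j.1 := by
          by_contra h
          simp [exchange, h] at h2
        simp [← this, Prod.ext_iff]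
      · have : i ≠ j := fun h => h1 (by rw [h])
        simp [exchange, this] at h2

/-- If `E * D = J` on the remainder, then after complete averaging of the union of the blocks
(and `D` on the remainder), one exchange round followed by averaging each block separately (and `E`
on the remainder) yields the global average. -/
lemma exchange_average {a B R : ℕ} (f : Fin R → Fin B) {D E : Matrix (Fin R) (Fin R) ℝ}
    (hD : ∀ j, ∑ i, D i j = 1) (hE : ∀ i, ∑ j, E i j = 1) (hED : E * D = avg (Fin R)) :
    fromBlocks (blockDiagonal fun _ : Fin a => avg (Fin B)) 0 0 E *
        exchange a B R f ((B : ℝ) / (a * B + R : ℕ)) *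
        fromBlocks (avg (Fin B × Fin a)) 0 0 D =
      avg ((Fin B × Fin a) ⊕ Fin R) := by
  set c : ℝ := (B : ℝ) / (a * B + R : ℕ) with hc
  rw [exchange, fromBlocks_multiply, fromBlocks_multiply]
  simp only [Matrix.zero_mul, Matrix.mul_zero, add_zero, zero_add]
  have hcard : (Fintype.card ((Fin B × Fin a) ⊕ Fin R) : ℝ) = a * B + R := by
    simp [mul_comm]
  have hsum : ∑ x : Fin B, ∑ i, (if f i = x then c else 0) = R * c := by
    rw [Finset.sum_comm]
    simp
  ext (⟨p, s⟩ | i) (⟨p', s'⟩ | i')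
  · have ha : (0 : ℝ) < a := by exact_mod_cast s.pos
    have hB : (0 : ℝ) < B := by exact_mod_cast p.pos
    have h : ∑ x : Fin B, (1 - ∑ i, (if f i = x then c else 0)) = B - R * c := by
      rw [Finset.sum_sub_distrib, hsum]
      simp
    have hn : (a * B + R : ℝ) ≠ 0 := by positivity
    rw [fromBlocks_apply₁₁, mul_apply]
    simp only [mul_diagonal, blockDiagonal_apply, Fintype.sum_prod_type, avg, of_apply, hcard,
      ite_mul, zero_mul, Finset.sum_ite_eq, Finset.mem_univ, if_true, Fintype.card_prod,
      Fintype.card_fin]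
    rw [← Finset.sum_mul, ← Finset.mul_sum, h, hc]
    push_cast
    field_simp
    ring
  · have hB : (0 : ℝ) < B := by exact_mod_cast p.pos
    have h : (blockDiagonal (fun _ : Fin a => avg (Fin B)) *
        (of fun p i => if f i = p.1 then c else 0 : Matrix (Fin B × Fin a) (Fin R) ℝ)) =
        of fun _ _ => (B : ℝ)⁻¹ * c := by
      ext ⟨x, t⟩ i
      simp [mul_apply, blockDiagonal_apply, Fintype.sum_prod_type, avg]
    rw [fromBlocks_apply₁₂, h, mul_apply]
    simp only [of_apply, avg, hcard]
    rw [← Finset.mul_sum, hD, hc]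
    push_cast
    field_simp
  · have ha : (0 : ℝ) < a := by exact_mod_cast s'.pos
    have hB : (0 : ℝ) < B := by exact_mod_cast p'.pos
    have h : ((of fun i p => if f i = p.1 then c else 0 : Matrix (Fin R) (Fin B × Fin a) ℝ) *
        avg (Fin B × Fin a)) = of fun _ _ => (B : ℝ)⁻¹ * c := by
      ext i ⟨x, t⟩
      simp [mul_apply, Fintype.sum_prod_type_right, avg]
      field_simp
    rw [fromBlocks_apply₂₁, Matrix.mul_assoc, h, mul_apply]
    simp only [of_apply, avg, hcard]
    rw [← Finset.sum_mul, hE, hc]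
    push_cast
    field_simp
  · have hR : (0 : ℝ) < R := by exact_mod_cast i.pos
    have h : E * (diagonal fun _ => 1 - c * a) * D = (1 - c * a) • avg (Fin R) := by
      rw [← hED, ← smul_one_eq_diagonal]
      simp
    rw [fromBlocks_apply₂₂, h]
    have hn : (a * B + R : ℝ) ≠ 0 := by positivity
    simp only [Matrix.smul_apply, avg, of_apply, hcard, Fintype.card_fin, smul_eq_mul, hc]
    push_cast
    field_simp
    ring

/-! ### The two phases and the theorem -/

/-- `D` averages the digit blocks of `n` in base `k + 1`; `E` then combines the block averages. -/
lemma exists_two_phase {k : ℕ} (hk : 1 ≤ k) (q : ℕ) : ∀ n < (k + 1) ^ q,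
    ∃ D E : Matrix (Fin n) (Fin n) ℝ, IsProd k q D ∧ IsProd k q E ∧ E * D = avg (Fin n) := by
  induction q with
  | zero =>
    intro n hn
    obtain rfl : n = 0 := by simpa using hn
    exact ⟨1, 1, rfl, rfl, Subsingleton.elim _ _⟩
  | succ q ih =>
    intro n hn
    set B := (k + 1) ^ q with hB
    have hB0 : 0 < B := by positivity
    have hR : n % B < B := Nat.mod_lt _ hB0
    have ha : n / B ≤ k := by
      have : n / B < k + 1 := (Nat.div_lt_iff_lt_mul hB0).2 (by rwa [pow_succ, mul_comm] at hn)
      omega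
    have hna : n / B * B + n % B = n := Nat.div_add_mod' n B
    generalize n / B = a at *
    generalize n % B = R at *
    obtain ⟨D, E, hD, hE, hED⟩ := ih R hR
    have e : Fin n ≃ (Fin B × Fin a) ⊕ Fin R :=
      Fintype.equivOfCardEq (by simp [← hna, mul_comm])
    have hJ : IsProd k q (avg (Fin B)) := isProd_avg_pow k q
    have hX := exchange_admissible hk ha (Fin.castLE_injective hR.le)
    have hJa : IsProd k 1 (avg (Fin a)) := isProd_avg_of_card_le (by simp; omega)
    refine ⟨(fromBlocks (avg (Fin B × Fin a)) 0 0 D).submatrix e e,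
      (fromBlocks (blockDiagonal fun _ : Fin a => avg (Fin B)) 0 0 E *
        exchange a B R (Fin.castLE hR.le) ((B : ℝ) / (a * B + R : ℕ))).submatrix e e,
      ?_, ?_, ?_⟩
    · have hJJ := isProd_avg_prod hJ hJa
      rw [add_comm] at hJJ
      exact (hJJ.directSum hD.succ).submatrix e
    · have h := ((hJ.blockDiagonal (β := Fin a)).directSum hE).mul
        (s := 1) ⟨_, 1, hX, rfl, (Matrix.mul_one _).symm⟩
      rw [add_comm] at h
      exact h.submatrix e
    · rw [submatrix_mul_equiv, exchange_average _ hD.sum_col hE.sum_row hED, avg_submatrix]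

lemma IsProd.exists_list {α : Type} [Fintype α] [DecidableEq α] {k r : ℕ} {M : Matrix α α ℝ}
    (h : IsProd k r M) :
    ∃ l : List (Matrix α α ℝ), l.length = r ∧ (∀ W ∈ l, Admissible k W) ∧ l.prod = M := by
  induction r generalizing M with
  | zero => exact ⟨[], rfl, by simp, Eq.symm h⟩
  | succ r ih =>
    obtain ⟨W, N, hW, hN, rfl⟩ := h
    obtain ⟨l, hl, hA, rfl⟩ := ih hN
    exact ⟨W :: l, by simp [hl], by simpa using ⟨hW, hA⟩, by simp⟩

/-- For every `n ≥ 2` and every `1 ≤ k ≤ n - 1` there is a finite-time convergent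
sequence of symmetric doubly stochastic matrices of maximum degree at most `k`
and length at most `2 log_{k+1} n + 2` whose product is `J_n`. -/
theorem base_graph_finite_time_convergence (n k : ℕ) (hn : 2 ≤ n)
    (hk1 : 1 ≤ k) (hk2 : k ≤ n - 1) :
    ∃ (m : ℕ) (W : Fin m → Matrix (Fin n) (Fin n) ℝ),
      (m : ℝ) ≤ 2 * Real.logb (k + 1) n + 2 ∧
      (∀ i, (W i).IsSymm) ∧
      (∀ i, DoublyStochastic (W i)) ∧
      (∀ i, MaxDegreeLE (W i) k) ∧
      (List.ofFn W).prod = Matrix.of (fun _ _ => (n : ℝ)⁻¹) := by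
  obtain ⟨D, E, hD, hE, hED⟩ :=
    exists_two_phase hk1 (Nat.log (k + 1) n + 1) n (Nat.lt_pow_succ_log_self (by omega) n)
  obtain ⟨l, hl, hA, hp⟩ := (hE.mul hD).exists_list
  refine ⟨l.length, l.get, ?_, fun i => ?_, fun i => ?_, fun i => (hA _ (l.get_mem i)).deg, ?_⟩
  · have h := Real.natLog_le_logb n (k + 1)
    rw [hl]
    push_cast at h ⊢
    linarith
  · exact Matrix.IsSymm.ext fun a b => (hA _ (l.get_mem i)).symm b a
  · have h := hA _ (l.get_mem i)
    exact ⟨h.nonneg, h.row, fun j => by simpa only [h.symm _ j] using h.row j⟩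
  · rw [List.ofFn_get, hp, hED]
    simp [avg]
end

section
/- Let n ≥ 2 and k ≥ 1 be integers such that every prime factor of n is at most k+1. Then there exist a natural number m with m ≤ max{1, 2·log_{k+2}(n)} and real n×n matrices W^(1), …, W^(m) such that: each W^(i) is symmetric and doubly stochastic, each row of each W^(i) has at most k nonzero off-diagonal entries, and W^(1) W^(2) ⋯ W^(m) = J_n. (This is the existence content of Lemma A.1: the k-peer Hyper-hypercube Graph is a finite-time convergent sequence of length at most max{1, 2·log_{k+2}(n)} with maximum degree at most k.) -/
open scoped Kronecker

/-- The conditions imposed on each matrix of the sequence: symmetric, doubly stochastic, and of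
maximum degree at most `k`. -/
def GossipMatrix {ι : Type*} [Fintype ι] (k : ℕ) (W : Matrix ι ι ℝ) : Prop :=
  W.IsSymm ∧ DoublyStochastic W ∧ MaxDegreeLE W k

/-- The uniform matrix `J` on the index type `ι`, with all entries `1 / |ι|`. -/
noncomputable def uniformMatrix (ι : Type*) [Fintype ι] : Matrix ι ι ℝ :=
  Matrix.of fun _ _ => (Fintype.card ι : ℝ)⁻¹

/-- The uniform matrix on `ι` is a product of `L` admissible matrices of degree at most `k`. -/
def Averageable (ι : Type*) [Fintype ι] [DecidableEq ι] (k L : ℕ) : Prop :=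
  ∃ Ws : List (Matrix ι ι ℝ), Ws.length = L ∧ (∀ W ∈ Ws, GossipMatrix k W) ∧
    Ws.prod = uniformMatrix ι

section Matrices

variable {ι κ : Type*} [Fintype ι] [Fintype κ] [DecidableEq ι] [DecidableEq κ]

lemma gossipMatrix_uniform {k : ℕ} (h : Fintype.card ι ≤ k + 1) :
    GossipMatrix k (uniformMatrix ι) := by
  refine ⟨by ext i j; simp [uniformMatrix], ⟨fun i j => by simp [uniformMatrix], fun i => ?_,
    fun i => ?_⟩, fun i => ?_⟩
  · have : Nonempty ι := ⟨i⟩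
    simp [uniformMatrix]
  · have : Nonempty ι := ⟨i⟩
    simp [uniformMatrix]
  · calc ({j | j ≠ i ∧ uniformMatrix ι i j ≠ 0} : Set ι).ncard
        ≤ (({i} : Set ι)ᶜ).ncard := Set.ncard_le_ncard (fun j hj => hj.1) (Set.toFinite _)
      _ ≤ k := by
        rw [Set.ncard_compl, Set.ncard_singleton, Nat.card_eq_fintype_card]
        omega

lemma GossipMatrix.submatrix {k : ℕ} {W : Matrix ι ι ℝ} (h : GossipMatrix k W) (e : κ ≃ ι) :
    GossipMatrix k (W.submatrix e e) := by
  obtain ⟨hs, ⟨h0, hr, hc⟩, hd⟩ := h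
  refine ⟨hs.submatrix e, ⟨fun i j => h0 _ _, fun i => ?_, fun j => ?_⟩, fun i => ?_⟩
  · simpa using (e.sum_comp fun j => W (e i) j).trans (hr _)
  · simpa using (e.sum_comp fun i => W i (e j)).trans (hc _)
  · refine le_trans ?_ (hd (e i))
    exact Set.ncard_le_ncard_of_injOn e (fun j hj => ⟨fun h => hj.1 (e.injective h), hj.2⟩)
      e.injective.injOn (Set.toFinite _)

lemma GossipMatrix.one_kronecker {k : ℕ} {W : Matrix κ κ ℝ} (h : GossipMatrix k W) :
    GossipMatrix k ((1 : Matrix ι ι ℝ) ⊗ₖ W) := by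
  obtain ⟨hs, ⟨h0, hr, hc⟩, hd⟩ := h
  refine ⟨?_, ⟨fun i j => ?_, fun i => ?_, fun j => ?_⟩, fun i => ?_⟩
  · ext i j
    simp [Matrix.kroneckerMap_apply, Matrix.one_apply, hs.apply i.2 j.2, eq_comm]
  · rw [Matrix.kroneckerMap_apply, Matrix.one_apply]
    split_ifs <;> simp [h0]
  · simp [Fintype.sum_prod_type, Matrix.kroneckerMap_apply, Matrix.one_apply, hr,
      ← Finset.mul_sum]
  · simp [Fintype.sum_prod_type, Matrix.kroneckerMap_apply, Matrix.one_apply, hc,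
      ← Finset.mul_sum]
  · refine le_trans ?_ (hd i.2)
    -- A nonzero entry in row `i` forces the first coordinates to agree.
    have key : ∀ j : ι × κ, ((1 : Matrix ι ι ℝ) ⊗ₖ W) i j ≠ 0 → i.1 = j.1 ∧ W i.2 j.2 ≠ 0 := by
      intro j hj
      rw [Matrix.kroneckerMap_apply, Matrix.one_apply] at hj
      split_ifs at hj with hij
      · exact ⟨hij, by simpa using hj⟩
      · simp at hj
    refine Set.ncard_le_ncard_of_injOn Prod.snd (fun j hj => ?_) (fun j hj j' hj' hjj => ?_)
      (Set.toFinite _)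
    · obtain ⟨h1, h2⟩ := key j hj.2
      exact ⟨fun h => hj.1 (Prod.ext h1.symm h), h2⟩
    · exact Prod.ext ((key j hj.2).1.symm.trans (key j' hj'.2).1) hjj

lemma GossipMatrix.kronecker_one {k : ℕ} {W : Matrix κ κ ℝ} (h : GossipMatrix k W) :
    GossipMatrix k (W ⊗ₖ (1 : Matrix ι ι ℝ)) := by
  convert (h.one_kronecker (ι := ι)).submatrix (Equiv.prodComm κ ι) using 1
  ext i j
  exact mul_comm _ _

lemma prod_map_one_kronecker (Ws : List (Matrix κ κ ℝ)) :
    (Ws.map fun W => (1 : Matrix ι ι ℝ) ⊗ₖ W).prod = 1 ⊗ₖ Ws.prod := by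
  induction Ws with
  | nil => simp
  | cons W Ws ih => simp [ih, ← Matrix.mul_kronecker_mul]

lemma prod_map_kronecker_one (Ws : List (Matrix κ κ ℝ)) :
    (Ws.map fun W => W ⊗ₖ (1 : Matrix ι ι ℝ)).prod = Ws.prod ⊗ₖ 1 := by
  induction Ws with
  | nil => simp
  | cons W Ws ih => simp [ih, ← Matrix.mul_kronecker_mul]

lemma prod_map_submatrix (e : κ ≃ ι) (Ws : List (Matrix ι ι ℝ)) :
    (Ws.map fun W => W.submatrix e e).prod = Ws.prod.submatrix e e := by
  induction Ws with
  | nil => simp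
  | cons W Ws ih => simp [ih, Matrix.submatrix_mul_equiv]

lemma Averageable.congr {k L : ℕ} (h : Averageable ι k L) (e : κ ≃ ι) : Averageable κ k L := by
  obtain ⟨Ws, hl, hg, hp⟩ := h
  refine ⟨Ws.map fun W => W.submatrix e e, by simpa using hl, ?_, ?_⟩
  · simp only [List.mem_map]
    rintro _ ⟨W, hW, rfl⟩
    exact (hg W hW).submatrix e
  · rw [prod_map_submatrix, hp]
    ext i j
    simp [uniformMatrix, Fintype.card_congr e]

/-- Averaging over `ι × κ` is averaging over the first coordinate and then over the second. -/
lemma Averageable.prod {k L M : ℕ} (h : Averageable ι k L) (h' : Averageable κ k M) :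
    Averageable (ι × κ) k (L + M) := by
  obtain ⟨Ws, hl, hg, hp⟩ := h
  obtain ⟨Vs, hl', hg', hp'⟩ := h'
  refine ⟨(Ws.map fun W => W ⊗ₖ (1 : Matrix κ κ ℝ)) ++ Vs.map fun W => (1 : Matrix ι ι ℝ) ⊗ₖ W,
    by simp [hl, hl'], ?_, ?_⟩
  · simp only [List.mem_append, List.mem_map]
    rintro _ (⟨W, hW, rfl⟩ | ⟨W, hW, rfl⟩)
    · exact (hg W hW).kronecker_one
    · exact (hg' W hW).one_kronecker
  · rw [List.prod_append, prod_map_one_kronecker, prod_map_kronecker_one,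
      ← Matrix.mul_kronecker_mul, hp, hp']
    ext i j
    simp [uniformMatrix, Matrix.kroneckerMap_apply, mul_comm]

end Matrices

lemma averageable_list (k : ℕ) (l : List ℕ) (h : ∀ a ∈ l, a ≤ k + 1) :
    Averageable (Fin l.prod) k l.length := by
  induction l with
  | nil =>
    refine ⟨[], rfl, fun W hW => absurd hW List.not_mem_nil, ?_⟩
    change (1 : Matrix (Fin 1) (Fin 1) ℝ) = uniformMatrix (Fin 1)
    ext i j
    simp [uniformMatrix, Matrix.one_apply, Subsingleton.elim i j]
  | cons a l ih =>
    have ha : Averageable (Fin a) k 1 :=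
      ⟨[uniformMatrix (Fin a)], rfl,
        by simpa using gossipMatrix_uniform (by simpa using h a (by simp)), by simp⟩
    have := (ha.prod (ih fun b hb => h b (by simp [hb]))).congr
      ((finCongr List.prod_cons).trans finProdFinEquiv.symm)
    rwa [add_comm] at this

/-- If any two entries of a list have product at least `B`, then `B ^ L ≤ (∏ a_i) ^ 2`, unless
`L = 1`. The entries are consumed in pairs, with a final triple when `L` is odd. -/
lemma pow_length_le_prod_sq (B : ℕ) : ∀ l : List ℕ, l.length ≠ 1 →
    l.Pairwise (fun a b => B ≤ a * b) → B ^ l.length ≤ l.prod ^ 2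
  | [], _, _ => by simp
  | [a], h, _ => by simp at h
  | [a, b], _, h => by
    have hab : B ≤ a * b := by simpa using h
    simpa using Nat.pow_le_pow_left hab 2
  | [a, b, c], _, h => by
    simp only [List.pairwise_cons, List.mem_cons, List.not_mem_nil] at h
    have hab : B ≤ a * b := h.1 b (by simp)
    have hac : B ≤ a * c := h.1 c (by simp)
    have hbc : B ≤ b * c := h.2.1 c (by simp)
    calc B ^ 3 = B * B * B := by ring
      _ ≤ (a * b) * (a * c) * (b * c) := by gcongr
      _ = [a, b, c].prod ^ 2 := by simp; ring
  | a :: b :: c :: d :: l, _, h => by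
    have ih := pow_length_le_prod_sq B (c :: d :: l) (by simp) (h.tail.tail)
    have hab : B ≤ a * b := (List.pairwise_cons.1 h).1 b (by simp)
    calc B ^ (a :: b :: c :: d :: l).length = B ^ 2 * B ^ (c :: d :: l).length := by
          simp only [List.length_cons]; ring
      _ ≤ (a * b) ^ 2 * (c :: d :: l).prod ^ 2 := by gcongr
      _ = (a :: b :: c :: d :: l).prod ^ 2 := by simp only [List.prod_cons]; ring

/-- Merging pairs of factors with product at most `k + 1` until none is left turns a
factorization into one in which any two factors have product at least `k + 2`. -/
lemma exists_merged (k : ℕ) (N : ℕ) : ∀ l : List ℕ, l.length = N → (∀ a ∈ l, a ≤ k + 1) →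
    ∃ l' : List ℕ, l'.prod = l.prod ∧ (∀ a ∈ l', a ≤ k + 1) ∧
      l'.Pairwise (fun a b => k + 2 ≤ a * b) := by
  induction N with
  | zero =>
    intro l hl h
    exact ⟨l, rfl, h, by simp [List.length_eq_zero_iff.1 hl]⟩
  | succ N ih =>
    intro l hl h
    by_cases hp : l.Pairwise (fun a b => k + 2 ≤ a * b)
    · exact ⟨l, rfl, h, hp⟩
    rw [List.pairwise_iff_forall_sublist] at hp
    push Not at hp
    obtain ⟨a, b, hsub, hab⟩ := hp
    obtain ⟨t, ht⟩ := hsub.exists_perm_append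
    have ht' : l.Perm (a :: b :: t) := by simpa using ht
    obtain ⟨l', h1, h2, h3⟩ := ih (a * b :: t) (by have := ht'.length_eq; simp at this ⊢; omega)
      (by
        intro c hc
        rcases List.mem_cons.1 hc with rfl | hc
        · omega
        · exact h c (ht'.mem_iff.2 (by simp [hc])))
    exact ⟨l', by rw [h1, ht'.prod_eq]; simp [mul_assoc], h2, h3⟩

lemma exists_factorization (n k : ℕ) (hn : n ≠ 0)
    (hfac : ∀ p : ℕ, p.Prime → p ∣ n → p ≤ k + 1) :
    ∃ l : List ℕ, l.prod = n ∧ (∀ a ∈ l, a ≤ k + 1) ∧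
      l.Pairwise (fun a b => k + 2 ≤ a * b) := by
  have := exists_merged k _ n.primeFactorsList rfl fun p hp =>
    hfac p (Nat.prime_of_mem_primeFactorsList hp) (Nat.dvd_of_mem_primeFactorsList hp)
  rwa [Nat.prod_primeFactorsList hn] at this


/-- If every prime factor of `n` is at most `k + 1`, then there is a finite-time
convergent sequence of symmetric doubly stochastic matrices of maximum degree at
most `k` and length at most `max 1 (2 log_{k+2} n)` whose product is `J_n`. -/
theorem hyper_hypercube_finite_time_convergence (n k : ℕ) (hn : 2 ≤ n) (hk : 1 ≤ k)
    (hfac : ∀ p : ℕ, p.Prime → p ∣ n → p ≤ k + 1) :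
    ∃ (m : ℕ) (W : Fin m → Matrix (Fin n) (Fin n) ℝ),
      (m : ℝ) ≤ max 1 (2 * Real.logb (k + 2) n) ∧
      (∀ i, (W i).IsSymm) ∧
      (∀ i, DoublyStochastic (W i)) ∧
      (∀ i, MaxDegreeLE (W i) k) ∧
      (List.ofFn W).prod = Matrix.of (fun _ _ => (n : ℝ)⁻¹) := by
  obtain ⟨l, rfl, hle, hpair⟩ := exists_factorization n k (by omega) hfac
  obtain ⟨Ws, hlen, hg, hprod⟩ := averageable_list k l hle
  refine ⟨Ws.length, Ws.get, ?_, fun i => (hg _ (List.get_mem _ _)).1,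
    fun i => (hg _ (List.get_mem _ _)).2.1, fun i => (hg _ (List.get_mem _ _)).2.2, ?_⟩
  · rw [hlen]
    by_cases h1 : l.length = 1
    · simp [h1]
    refine le_max_of_le_right ?_
    have hpow : ((k : ℝ) + 2) ^ l.length ≤ (l.prod : ℝ) ^ 2 := by
      exact_mod_cast pow_length_le_prod_sq (k + 2) l h1 hpair
    have hb : (1 : ℝ) < k + 2 := by
      have : (0 : ℝ) ≤ k := k.cast_nonneg
      linarith
    have hlog := Real.logb_le_logb_of_le hb (by positivity) hpow
    rw [Real.logb_pow, Real.logb_pow, Real.logb_self_eq_one hb] at hlog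
    simpa using hlog
  · rw [List.ofFn_get, hprod]
    simp [uniformMatrix]
end

section
/- Let n ≥ 2 and k ≥ 1 be integers such that every prime factor of n is at most k+1, and let L be the minimal length of a factorization of n with factors in [2, k+1] (such a factorization exists since every prime factor of n is at most k+1). Then L ≤ max{1, 2·log_{k+2}(n)}. -/
/-!
In a factorization of minimal length, any two factors at distinct positions have product at least
`k + 2`: otherwise they could be merged into a single factor (`lt_mul_of_minimal`). For `L ≥ 2`,
multiplying this inequality over the `L` cyclically consecutive pairs `(i, i + 1)` uses every
factor exactly twice, so `(k + 2) ^ L ≤ n ^ 2`, and taking logarithms gives the bound.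
-/

/-- Merging two factors of a minimal factorization must produce a number exceeding `k + 1`. -/
lemma lt_mul_of_minimal {n k m : ℕ} (f : Fin (m + 1) → ℕ)
    (hf : ∀ l, 2 ≤ f l ∧ f l ≤ k + 1) (hprod : ∏ l, f l = n)
    (hmin : ∀ (L' : ℕ) (g : Fin L' → ℕ),
      (∀ l, 2 ≤ g l ∧ g l ≤ k + 1) → ∏ l, g l = n → m + 1 ≤ L')
    {i j : Fin (m + 1)} (hij : j ≠ i) : k + 2 ≤ f i * f j := by
  by_contra! hlt
  -- Replace the factor at `i` by `f i * f j` and drop position `j`.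
  set F : Fin (m + 1) → ℕ := Function.update f i (f i * f j) with hF
  have hFj : F j = f j := Function.update_of_ne hij _ _
  have hFle : ∀ l, 2 ≤ F l ∧ F l ≤ k + 1 := by
    intro l
    by_cases hl : l = i
    · subst hl
      rw [hF, Function.update_self]
      have h1 := (hf l).1
      have h2 := (hf j).1
      exact ⟨by nlinarith, by omega⟩
    · rw [hF, Function.update_of_ne hl]
      exact hf l
  have hFprod : ∏ l, F l = f j * n := by
    rw [hF, Finset.prod_update_of_mem (Finset.mem_univ i), ← hprod,
      ← Finset.mul_prod_erase Finset.univ f (Finset.mem_univ i), Finset.sdiff_singleton_eq_erase]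
    ring
  rw [Fin.prod_univ_succAbove F j, hFj] at hFprod
  have hj : 0 < f j := by have := (hf j).1; omega
  have := hmin m (fun t => F (j.succAbove t)) (fun l => hFle _)
    (Nat.eq_of_mul_eq_mul_left hj hFprod)
  omega

/-- If every prime factor of `n` is at most `k + 1` and `L` is the minimal length
of a factorization of `n` with factors in `[2, k+1]`, then
`L ≤ max 1 (2 log_{k+2} n)`. -/
theorem minimal_factorization_length_bound (n k L : ℕ) (hn : 2 ≤ n) (hk : 1 ≤ k)
    (hfac : ∀ p : ℕ, p.Prime → p ∣ n → p ≤ k + 1)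
    (f : Fin L → ℕ)
    (hf : ∀ l, 2 ≤ f l ∧ f l ≤ k + 1)
    (hprod : ∏ l, f l = n)
    (hmin : ∀ (L' : ℕ) (g : Fin L' → ℕ),
      (∀ l, 2 ≤ g l ∧ g l ≤ k + 1) → ∏ l, g l = n → L ≤ L') :
    (L : ℝ) ≤ max 1 (2 * Real.logb (k + 2) n) := by
  rcases Nat.lt_or_ge L 2 with hL | hL
  · exact le_max_of_le_left (by exact_mod_cast Nat.lt_succ_iff.mp hL)
  apply le_max_of_le_right
  obtain ⟨m, rfl⟩ := Nat.exists_eq_add_of_le' hL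
  have hpow : (k + 2) ^ (m + 2) ≤ n ^ 2 := by
    calc (k + 2) ^ (m + 2) = ∏ _i : Fin (m + 2), (k + 2) := by simp
      _ ≤ ∏ i : Fin (m + 2), f i * f (i + 1) :=
        Finset.prod_le_prod' fun i _ => lt_mul_of_minimal f hf hprod hmin (by simp)
      _ = n ^ 2 := by
        have hshift : ∏ i : Fin (m + 2), f (i + 1) = ∏ i, f i :=
          Equiv.prod_comp (Equiv.addRight (1 : Fin (m + 2))) f
        rw [Finset.prod_mul_distrib, hshift, hprod, sq]
  have hn0 : (0 : ℝ) < n := by exact_mod_cast (by omega : 0 < n)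
  have hb : (1 : ℝ) < (k : ℝ) + 2 := by linarith [(Nat.cast_nonneg k : (0 : ℝ) ≤ k)]
  have hlog : ((m + 2 : ℕ) : ℝ) ≤ Real.logb (k + 2) ((n : ℝ) ^ 2) := by
    rw [Real.le_logb_iff_rpow_le hb (by positivity), Real.rpow_natCast]
    exact_mod_cast hpow
  rwa [Real.logb_pow, Nat.cast_ofNat] at hlog
end

section
/- Let L ≥ 1 and let n_1, …, n_L be positive integers, and set n = n_1 · n_2 ⋯ n_L. Index the n nodes by tuples x = (x_1, …, x_L) with x_l ∈ {0, 1, …, n_l − 1}. For each l ∈ {1, …, L} define the n×n matrix W^(l) by W^(l)_{x,y} = 1/n_l if x_m = y_m for all coordinates m ≠ l, and W^(l)_{x,y} = 0 otherwise. Then the matrix product W^(1) W^(2) ⋯ W^(L) equals J_n, the n×n matrix all of whose entries are 1/n. (This is the exact-averaging property of the k-peer Hyper-hypercube Graph when n = n_1 × ⋯ × n_L.) -/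
/-!
Multiplying by `W^(l)` averages over the coordinate `l`. Hence the product of the `W^(l)` over a
duplicate-free list `s` of coordinates averages over all coordinates in `s` and fixes the others:
its `(x, y)` entry is `∏_{l ∈ s} 1/n_l` if `x` and `y` agree outside `s`, and `0` otherwise
(`prod_map_coordAverage`). Taking for `s` the list of all coordinates leaves no condition on
`x` and `y`, and every entry is `1/n`.
-/

/-- The matrix `W^(l)` that averages over the coordinate `l`. -/
noncomputable def coordAverage {L : ℕ} (nf : Fin L → ℕ) (l : Fin L) :
    Matrix (∀ i, Fin (nf i)) (∀ i, Fin (nf i)) ℝ :=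
  Matrix.of fun x y => if ∀ m, m ≠ l → x m = y m then (nf l : ℝ)⁻¹ else 0

/-- In the induction step `W^(a) * P`, where `P` averages over `s` and `a ∉ s`, an intermediate
node `z` contributes to the `(x, y)` entry only if it agrees with `x` off `a` and with `y` off `s`.
As `a ∉ s`, this forces `z` to be `x` with its coordinate `a` replaced by `y a`. -/
theorem prod_map_coordAverage {L : ℕ} (nf : Fin L → ℕ) (s : List (Fin L)) (hs : s.Nodup) :
    (s.map (coordAverage nf)).prod = Matrix.of fun x y : (∀ i, Fin (nf i)) =>
      if ∀ m, m ∉ s → x m = y m then (s.map fun l => (nf l : ℝ)⁻¹).prod else 0 := by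
  induction s with
  | nil =>
    ext x y
    simp [Matrix.one_apply, funext_iff]
  | cons a s ih =>
    obtain ⟨ha, hs⟩ := List.nodup_cons.mp hs
    rw [List.map_cons, List.prod_cons, ih hs]
    ext x y
    rw [Matrix.mul_apply, Finset.sum_eq_single (Function.update x a (y a))]
    · have h₁ : ∀ m, m ≠ a → x m = Function.update x a (y a) m := fun m hm => by
        rw [Function.update_of_ne hm]
      have h₂ : (∀ m, m ∉ s → Function.update x a (y a) m = y m) ↔
          ∀ m, m ∉ a :: s → x m = y m := by
        refine forall_congr' fun m => ?_
        by_cases hm : m = a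
        · subst hm
          simp
        · simp [hm]
      simp only [coordAverage, Matrix.of_apply, if_pos h₁, h₂, List.map_cons, List.prod_cons,
        mul_ite, mul_zero]
    · intro z _ hz
      simp only [coordAverage, Matrix.of_apply]
      by_cases h₁ : ∀ m, m ≠ a → x m = z m
      · by_cases h₂ : ∀ m, m ∉ s → z m = y m
        · refine absurd (funext fun m => ?_) hz
          by_cases hm : m = a
          · subst hm
            rw [Function.update_self, h₂ m ha]
          · rw [Function.update_of_ne hm, h₁ m hm]
        · rw [if_neg h₂, mul_zero]
      · rw [if_neg h₁, zero_mul]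
    · exact fun h => absurd (Finset.mem_univ _) h

/-- Exact-averaging property of the `k`-peer hyper-hypercube graph: with nodes
indexed by tuples `x ∈ ∏ l, {0, …, n_l − 1}` and `W^(l)_{x,y} = 1/n_l` iff
`x` and `y` agree on all coordinates except possibly `l`, the ordered product
`W^(1) ⋯ W^(L)` is the matrix with all entries `1/n`, `n = n_1 ⋯ n_L`. -/
theorem hyper_hypercube_product_is_average (L : ℕ) (hL : 1 ≤ L)
    (nf : Fin L → ℕ) (hnf : ∀ l, 1 ≤ nf l) :
    (List.ofFn (fun l : Fin L =>
      Matrix.of (fun x y : (∀ i : Fin L, Fin (nf i)) =>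
        if ∀ m, m ≠ l → x m = y m then ((nf l : ℝ))⁻¹ else 0))).prod
      = Matrix.of (fun _ _ : (∀ i : Fin L, Fin (nf i)) =>
          ((∏ l, nf l : ℕ) : ℝ)⁻¹) := by
  have h := prod_map_coordAverage nf (List.finRange L) (List.nodup_finRange L)
  rw [← List.ofFn_eq_map, ← List.ofFn_eq_map, List.prod_ofFn] at h
  refine h.trans ?_
  ext x y
  simp [List.mem_finRange]
end

section
/- Let τ ≥ 1 and n = 2^τ, and index nodes by the residues ℤ/nℤ. For each l ∈ {0, 1, …, τ−1} define the n×n matrix W^(l) by W^(l)_{x,y} = 1/2 if y = x, W^(l)_{x,y} = 1/2 if y = x + 2^l (mod n), and W^(l)_{x,y} = 0 otherwise. Then each W^(l) is doubly stochastic, and the product W^(0) W^(1) ⋯ W^(τ−1) equals J_n, the n×n matrix all of whose entries are 1/n. (This is the finite-time convergence of the 1-peer exponential graph when the number of nodes is a power of 2.) -/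
namespace OnePeer

/-- The permutation matrix of the translation by `c`: node `x` points to node `x + c`. -/
def shift {n : ℕ} (c : ZMod n) : Matrix (ZMod n) (ZMod n) ℝ :=
  Matrix.of fun x y => if y = x + c then 1 else 0

/-- The one-peer averaging matrix at offset `c`, in the case-split form of the main statement. -/
noncomputable def avg {n : ℕ} (c : ZMod n) : Matrix (ZMod n) (ZMod n) ℝ :=
  Matrix.of fun x y => if y = x then (1 : ℝ) / 2 else if y = x + c then (1 : ℝ) / 2 else 0

lemma shift_mul_shift {n : ℕ} [NeZero n] (a b : ZMod n) :
    shift a * shift b = shift (a + b) := by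
  ext x y
  rw [Matrix.mul_apply, Finset.sum_eq_single (x + a)]
  · simp [shift, add_assoc]
  · intro j _ hj
    simp [shift, hj]
  · simp

lemma avg_eq {n : ℕ} {c : ZMod n} (hc : c ≠ 0) :
    avg c = (1 / 2 : ℝ) • (shift 0 + shift c) := by
  ext x y
  by_cases h : y = x
  · simp [avg, shift, h, hc]
  · by_cases hy : y = x + c <;> simp [avg, shift, h, hy, hc]

lemma doublyStochastic_avg {n : ℕ} [NeZero n] {c : ZMod n} (hc : c ≠ 0) :
    DoublyStochastic (avg c) := by
  refine ⟨fun x y => ?_, fun x => ?_, fun y => ?_⟩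
  · simp only [avg, Matrix.of_apply]
    split_ifs <;> norm_num
  · rw [avg_eq hc]
    simp [shift, ← Finset.mul_sum, Finset.sum_add_distrib]
    norm_num
  · have h (x : ZMod n) : y = x + c ↔ y - c = x := sub_eq_iff_eq_add.symm
    rw [avg_eq hc]
    simp [shift, ← Finset.mul_sum, Finset.sum_add_distrib, h]
    norm_num

lemma two_pow_ne_zero {τ l : ℕ} (hl : l < τ) : (2 : ZMod (2 ^ τ)) ^ l ≠ 0 := by
  intro h
  have hcast : ((2 ^ l : ℕ) : ZMod (2 ^ τ)) = 0 := by exact_mod_cast h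
  rw [ZMod.natCast_eq_zero_iff, Nat.pow_dvd_pow_iff_le_right (by norm_num)] at hcast
  omega

/-- The partial product of the first `k` averaging matrices is uniform over the translations by
`0, …, 2 ^ k - 1`. -/
lemma prod_eq_sum_shift {τ k : ℕ} (hk : k ≤ τ) :
    (List.ofFn fun l : Fin k => avg ((2 : ZMod (2 ^ τ)) ^ (l : ℕ))).prod =
      ((2 : ℝ) ^ k)⁻¹ • ∑ i ∈ Finset.range (2 ^ k), shift (i : ZMod (2 ^ τ)) := by
  induction k with
  | zero =>
    ext x y
    simp [shift, Matrix.one_apply, eq_comm]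
  | succ k ih =>
    rw [List.ofFn_succ', List.concat_eq_append, List.prod_append]
    simp only [Fin.val_castSucc, Fin.val_last, List.prod_singleton]
    -- Indices below `2 ^ (k + 1)` split by their leading binary digit.
    rw [ih (by omega), avg_eq (two_pow_ne_zero (by omega)), pow_succ (2 : ℕ) k, mul_two (2 ^ k : ℕ),
      Finset.sum_range_add, smul_mul_smul_comm, mul_add, Finset.sum_mul, Finset.sum_mul]
    congr 1
    · rw [pow_succ, mul_inv, one_div]
    · simp [shift_mul_shift, add_comm]

lemma sum_range_shift (n : ℕ) [NeZero n] (x y : ZMod n) :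
    (∑ i ∈ Finset.range n, shift (i : ZMod n)) x y = 1 := by
  rw [Matrix.sum_apply, Finset.sum_eq_single (y - x).val]
  · simp [shift]
  · intro i hi hne
    have : y ≠ x + i := by
      rintro rfl
      apply hne
      rw [add_sub_cancel_left, ZMod.val_natCast_of_lt (Finset.mem_range.mp hi)]
    simp [shift, this]
  · intro h
    exact absurd (Finset.mem_range.mpr (ZMod.val_lt _)) h

end OnePeer

/-- Finite-time convergence of the 1-peer exponential graph on `n = 2^τ` nodes
indexed by `ℤ/nℤ`: each `W^(l)` (averaging node `x` with node `x + 2^l`) is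
doubly stochastic and the ordered product `W^(0) ⋯ W^(τ−1)` equals `J_n`. -/
theorem one_peer_exponential_finite_time_convergence (τ : ℕ) (hτ : 1 ≤ τ) :
    (∀ l : Fin τ, DoublyStochastic
      (Matrix.of (fun x y : ZMod (2 ^ τ) =>
        if y = x then (1 : ℝ) / 2
        else if y = x + (2 : ZMod (2 ^ τ)) ^ (l : ℕ) then (1 : ℝ) / 2 else 0))) ∧
    (List.ofFn (fun l : Fin τ =>
      Matrix.of (fun x y : ZMod (2 ^ τ) =>
        if y = x then (1 : ℝ) / 2
        else if y = x + (2 : ZMod (2 ^ τ)) ^ (l : ℕ) then (1 : ℝ) / 2 else 0))).prod =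
      Matrix.of (fun _ _ : ZMod (2 ^ τ) => ((2 ^ τ : ℕ) : ℝ)⁻¹) := by
  refine ⟨fun l => OnePeer.doublyStochastic_avg (OnePeer.two_pow_ne_zero l.isLt), ?_⟩
  refine (OnePeer.prod_eq_sum_shift le_rfl).trans ?_
  ext x y
  rw [Matrix.smul_apply, OnePeer.sum_range_shift]
  simp
end

section
/- Let k ≥ 1 and p ≥ 1 be integers and set n = (k+1)^p. Then there exist real n×n matrices W^(1), …, W^(p) such that each W^(i) is symmetric and doubly stochastic, every row of each W^(i) has exactly k nonzero off-diagonal entries, and W^(1) W^(2) ⋯ W^(p) = J_n. In particular, when n is a perfect power of k+1, there is a finite-time convergent sequence of length exactly log_{k+1}(n) with maximum degree k. -/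
/-- The matrix on digit strings that averages uniformly over the digits in the positions in `S`:
the entry at `(f, g)` is `(k + 1) ^ (-|S|)` if `f` and `g` agree outside `S`, and `0` otherwise. -/
noncomputable def avgMatrix {k p : ℕ} (S : Finset (Fin p)) :
    Matrix (Fin p → Fin (k + 1)) (Fin p → Fin (k + 1)) ℝ :=
  open Classical in
  Matrix.of fun f g => if ∀ j, j ∉ S → f j = g j then (((k : ℝ) + 1) ^ S.card)⁻¹ else 0

theorem avgMatrix_symm {k p : ℕ} (S : Finset (Fin p)) (f g : Fin p → Fin (k + 1)) :
    avgMatrix S f g = avgMatrix S g f := by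
  simp only [avgMatrix, Matrix.of_apply, eq_comm]

theorem agree_off_singleton {k p : ℕ} (i : Fin p) (f g : Fin p → Fin (k + 1)) :
    (∀ j, j ∉ ({i} : Finset (Fin p)) → f j = g j) ↔ ∃ c, Function.update f i c = g := by
  constructor
  · intro h
    refine ⟨g i, funext fun j => ?_⟩
    by_cases hj : j = i
    · subst hj; simp
    · rw [Function.update_of_ne hj]; exact h j (by simpa using hj)
  · rintro ⟨c, rfl⟩ j hj
    rw [Function.update_of_ne (by simpa using hj)]

/-- Multiplying by the matrix of a single position averages over the values of that digit. -/
theorem sum_avgMatrix_singleton {k p : ℕ} (i : Fin p) (f : Fin p → Fin (k + 1))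
    (F : (Fin p → Fin (k + 1)) → ℝ) :
    ∑ g, avgMatrix {i} f g * F g = ((k : ℝ) + 1)⁻¹ * ∑ c, F (Function.update f i c) := by
  classical
  have h : (Finset.univ.filter fun g : Fin p → Fin (k + 1) =>
      ∀ j, j ∉ ({i} : Finset (Fin p)) → f j = g j)
      = Finset.univ.image (Function.update f i) := by
    ext g
    simp only [agree_off_singleton, Finset.mem_filter, Finset.mem_univ, true_and,
      Finset.mem_image]
  rw [← Finset.sum_image (s := Finset.univ) (g := Function.update f i) (f := F)
    (fun a _ b _ hab => Function.update_injective f i hab), ← h, Finset.sum_filter, Finset.mul_sum]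
  refine Finset.sum_congr rfl fun g _ => ?_
  simp only [avgMatrix, Matrix.of_apply, Finset.card_singleton, pow_one]
  split_ifs <;> simp

theorem avgMatrix_mul {k p : ℕ} (i : Fin p) (S : Finset (Fin p)) (hi : i ∉ S) :
    avgMatrix (k := k) {i} * avgMatrix S = avgMatrix (insert i S) := by
  classical
  ext f h
  rw [Matrix.mul_apply, sum_avgMatrix_singleton]
  -- Only the digit `c = h i` contributes, since position `i` is not averaged by `S`.
  rw [Finset.sum_eq_single (h i)]
  · have key : (∀ j, j ∉ S → Function.update f i (h i) j = h j) ↔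
        ∀ j, j ∉ insert i S → f j = h j := by
      refine forall_congr' fun j => ?_
      by_cases hj : j = i
      · subst hj; simp
      · simp [hj]
    simp only [avgMatrix, Matrix.of_apply, key, Finset.card_insert_of_notMem hi]
    split_ifs
    · rw [pow_succ, mul_inv, mul_comm]
    · simp
  · intro c _ hc
    simp only [avgMatrix, Matrix.of_apply]
    rw [if_neg]
    intro H
    exact hc (by simpa using H i hi)
  · simp

theorem prod_digitMatrix {k p : ℕ} (l : List (Fin p)) (hl : l.Nodup) :
    (l.map fun i => avgMatrix (k := k) {i}).prod = avgMatrix l.toFinset := by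
  induction l with
  | nil =>
    ext f g
    simp [avgMatrix, Matrix.one_apply, funext_iff]
  | cons i l ih =>
    rw [List.nodup_cons] at hl
    rw [List.map_cons, List.prod_cons, ih hl.2, avgMatrix_mul i _ (by simpa using hl.1),
      List.toFinset_cons]

theorem avgMatrix_row_sum {k p : ℕ} (i : Fin p) (f : Fin p → Fin (k + 1)) :
    ∑ g, avgMatrix {i} f g = 1 := by
  have h := sum_avgMatrix_singleton i f fun _ => 1
  have hk : (k : ℝ) + 1 ≠ 0 := by positivity
  simpa [hk] using h

theorem avgMatrix_degree {k p : ℕ} (i : Fin p) (f : Fin p → Fin (k + 1)) :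
    ({g | g ≠ f ∧ avgMatrix {i} f g ≠ 0} : Set (Fin p → Fin (k + 1))).ncard = k := by
  have hk : (k : ℝ) + 1 ≠ 0 := by positivity
  have h : ({g | g ≠ f ∧ avgMatrix {i} f g ≠ 0} : Set (Fin p → Fin (k + 1)))
      = Function.update f i '' {f i}ᶜ := by
    ext g
    simp only [avgMatrix, Matrix.of_apply, agree_off_singleton, Set.mem_ofPred_eq, Set.mem_image,
      Set.mem_compl_iff, Set.mem_singleton_iff]
    constructor
    · rintro ⟨hne, h0⟩
      by_cases hc : ∃ c, Function.update f i c = g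
      · obtain ⟨c, rfl⟩ := hc
        exact ⟨c, fun hcf => hne (by simp [hcf]), rfl⟩
      · simp [hc] at h0
    · rintro ⟨c, hc, rfl⟩
      refine ⟨fun H => hc (by simpa using congrFun H i), ?_⟩
      rw [if_pos ⟨c, rfl⟩]
      simpa using hk
  rw [h, Set.ncard_image_of_injective _ (Function.update_injective f i), Set.ncard_compl]
  simp

/-- When `n = (k+1)^p`, there is a finite-time convergent sequence of exactly
`p = log_{k+1} n` symmetric doubly stochastic matrices, each row of each matrix
having exactly `k` nonzero off-diagonal entries, whose product is `J_n`. -/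
theorem perfect_power_finite_time_convergence (k p : ℕ) (hk : 1 ≤ k) (hp : 1 ≤ p) :
    ∃ W : Fin p → Matrix (Fin ((k + 1) ^ p)) (Fin ((k + 1) ^ p)) ℝ,
      (∀ i, (W i).IsSymm) ∧
      (∀ i, DoublyStochastic (W i)) ∧
      (∀ i, ∀ x : Fin ((k + 1) ^ p),
        ({y | y ≠ x ∧ W i x y ≠ 0} : Set (Fin ((k + 1) ^ p))).ncard = k) ∧
      (List.ofFn W).prod =
        Matrix.of (fun _ _ => (((k + 1) ^ p : ℕ) : ℝ)⁻¹) := by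
  let e : (Fin p → Fin (k + 1)) ≃ Fin ((k + 1) ^ p) := finFunctionFinEquiv
  have hrow : ∀ i x, ∑ y, avgMatrix {i} (e.symm x) (e.symm y) = 1 := fun i x => by
    rw [Equiv.sum_comp e.symm fun g => avgMatrix {i} (e.symm x) g, avgMatrix_row_sum]
  refine ⟨fun i => Matrix.reindexAlgEquiv ℝ ℝ e (avgMatrix {i}), fun i => ?_,
    fun i => ⟨fun x y => ?_, fun x => ?_, fun y => ?_⟩, fun i x => ?_, ?_⟩
  · ext x y
    exact avgMatrix_symm _ _ _
  · simp only [Matrix.coe_reindexAlgEquiv, Matrix.reindex_apply, Matrix.submatrix_apply,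
      avgMatrix, Matrix.of_apply]
    split_ifs <;> positivity
  · exact hrow i x
  · simp only [Matrix.coe_reindexAlgEquiv, Matrix.reindex_apply, Matrix.submatrix_apply]
    simp only [avgMatrix_symm _ _ (e.symm y)]
    exact hrow i y
  · refine Eq.trans ?_ (avgMatrix_degree i (e.symm x))
    rw [← Set.ncard_image_of_injective _ e.injective]
    congr 1
    ext y
    simp [Equiv.image_eq_preimage_symm]
  · have h := congrArg (Matrix.reindexAlgEquiv ℝ ℝ e)
      (prod_digitMatrix (k := k) (List.finRange p) (List.nodup_finRange p))
    rw [map_list_prod, List.map_map] at h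
    rw [List.ofFn_eq_map]
    refine h.trans ?_
    ext x y
    simp [avgMatrix]
end
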